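/- Let Ω ⊆ ℂ be an open set and k : ℂ → ℂ → ℂ a function such that: (i) for every ω ∈ Ω, the function z ↦ k z ω is analytic on Ω; (ii) k z ω = conj (k ω z) for all z, ω ∈ Ω. Then the function (z,w) ↦ k z (conj w) is jointly analytic on Ω × Ω* ⊆ ℂ × ℂ, where Ω* = {conj w : w ∈ Ω}; i.e. AnalyticOn ℂ (fun p : ℂ × ℂ => k p.1 (conj p.2)) (Ω ×ˢ Ω*). -/

import Mathlib

open ComplexConjugate Complex

lemma hk_jensen {c : ℂ} {t : ℝ} {f : ℂ → ℂ} (ht : 0 < t)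
    (hf : AnalyticOnNhd ℂ f (Metric.closedBall c t)) (hc : f c ≠ 0) :
    Real.log ‖f c‖ ≤ Real.circleAverage (fun z => Real.log ‖f z‖) c t := by
  have habs : |t| = t := abs_of_pos ht
  have hf' : AnalyticOnNhd ℂ f (Metric.closedBall c |t|) := by rwa [habs]
  rw [AnalyticOnNhd.circleAverage_log_norm ht.ne' hf' hc]
  have : 0 ≤ ∑ᶠ u, (MeromorphicOn.divisor f (Metric.closedBall c |t|) u : ℝ)
      * Real.log (t * ‖c - u‖⁻¹) := by
    apply finsum_nonneg
    intro u
    by_cases hu : u ∈ Metric.closedBall c |t|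
    · apply mul_nonneg
      · have := MeromorphicOn.AnalyticOnNhd.divisor_nonneg hf' u
        exact_mod_cast this
      · by_cases h0 : ‖c - u‖ = 0
        · simp [h0]
        · apply Real.log_nonneg
          have hpos : 0 < ‖c - u‖ := lt_of_le_of_ne (norm_nonneg _) (Ne.symm h0)
          rw [habs, Metric.mem_closedBall, dist_comm, dist_eq_norm] at hu
          rw [← div_eq_mul_inv, le_div_iff₀ hpos]
          linarith
    · simp [hu]
  linarith

open MeasureTheory in
lemma hk_circle (E : Set ℂ) (hE : MeasurableSet E) (w : ℂ) (ρ κ : ℝ) (hρ : 0 < ρ) (hκ : 0 < κ)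
    (hv : volume E < ENNReal.ofReal (Real.pi * ρ ^ 2 * κ)) :
    ∃ t, 0 < t ∧ t < ρ ∧ Real.circleAverage (E.indicator (fun _ => (1 : ℝ))) w t ≤ κ := by
  by_contra! hcon
  have hmeas : Measurable (E.indicator (fun _ => (1 : ENNReal))) :=
    measurable_const.indicator hE
  have hmeasR : Measurable (E.indicator (fun _ => (1 : ℝ))) :=
    measurable_const.indicator hE
  have key : ∀ t, 0 < t → t < ρ → ENNReal.ofReal (2 * Real.pi * κ) ≤
      ∫⁻ θ in Set.Ioo (-Real.pi) Real.pi, E.indicator (fun _ => (1 : ENNReal)) (circleMap w t θ) := by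
    intro t ht htρ
    have h1 := (hcon t ht htρ).le
    rw [Real.circleAverage_eq_integral_add (-Real.pi),
      intervalIntegral.integral_comp_add_right
        (fun θ => E.indicator (fun _ => (1 : ℝ)) (circleMap w t θ))] at h1
    have e2 : 2 * Real.pi + -Real.pi = Real.pi := by ring
    rw [e2, zero_add, intervalIntegral.integral_of_le (by linarith [Real.pi_pos]),
      integral_Ioc_eq_integral_Ioo, smul_eq_mul, inv_mul_eq_div, le_div_iff₀ (by positivity)] at h1
    have hcm : Measurable (fun θ => E.indicator (fun _ => (1 : ℝ)) (circleMap w t θ)) :=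
      hmeasR.comp (continuous_circleMap w t).measurable
    have h3 : (∫ θ in Set.Ioo (-Real.pi) Real.pi, E.indicator (fun _ => (1 : ℝ)) (circleMap w t θ))
        = ENNReal.toReal (∫⁻ θ in Set.Ioo (-Real.pi) Real.pi,
          E.indicator (fun _ => (1 : ENNReal)) (circleMap w t θ)) := by
      rw [integral_eq_lintegral_of_nonneg_ae]
      · congr 1
        apply lintegral_congr
        intro θ
        by_cases h : circleMap w t θ ∈ E <;> simp [h]
      · refine Filter.Eventually.of_forall fun θ => ?_
        exact Set.indicator_nonneg (fun _ _ => zero_le_one) _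
      · exact hcm.aestronglyMeasurable
    rw [h3] at h1
    apply ENNReal.ofReal_le_of_le_toReal
    linarith
  have hvol : volume E = ∫⁻ p in Complex.polarCoord.target,
      ENNReal.ofReal p.1 • E.indicator (fun _ => (1 : ENNReal)) (w + Complex.polarCoord.symm p) := by
    refine Eq.trans ?_ (Complex.lintegral_comp_polarCoord_symm
      (fun x => E.indicator (fun _ => (1 : ENNReal)) (w + x))).symm
    rw [lintegral_add_left_eq_self (fun x => E.indicator (fun _ => (1 : ENNReal)) x) w]
    simp [lintegral_indicator hE]
  have hpm : ∀ p : ℝ × ℝ, w + Complex.polarCoord.symm p = circleMap w p.1 p.2 := by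
    intro p
    simp [circleMap, Complex.exp_mul_I]
  simp_rw [hpm] at hvol
  have hle : ENNReal.ofReal (Real.pi * ρ ^ 2 * κ) ≤ volume E := by
    rw [hvol, Complex.polarCoord_target, Measure.volume_eq_prod, setLIntegral_prod]
    · calc ENNReal.ofReal (Real.pi * ρ ^ 2 * κ)
          = ∫⁻ t in Set.Ioo 0 ρ, ENNReal.ofReal t * ENNReal.ofReal (2 * Real.pi * κ) := by
            rw [lintegral_mul_const _ (by fun_prop)]
            rw [← ofReal_integral_eq_lintegral_ofReal]
            · rw [← integral_Ioc_eq_integral_Ioo, ← intervalIntegral.integral_of_le hρ.le,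
                integral_id, ← ENNReal.ofReal_mul (by simp; positivity)]
              congr 1; ring
            · exact (continuous_id.integrableOn_Icc (a := 0) (b := ρ)).mono_set Set.Ioo_subset_Icc_self
            · refine (ae_restrict_iff' measurableSet_Ioo).2 (Filter.Eventually.of_forall ?_)
              intro x hx; exact hx.1.le
        _ ≤ ∫⁻ t in Set.Ioo 0 ρ, ∫⁻ θ in Set.Ioo (-Real.pi) Real.pi,
              ENNReal.ofReal t • E.indicator (fun _ => (1 : ENNReal)) (circleMap w t θ) := by
            apply setLIntegral_mono' measurableSet_Ioo
            intro t ht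
            simp only [smul_eq_mul]
            rw [lintegral_const_mul]
            · gcongr
              exact key t ht.1 ht.2
            · exact hmeas.comp (continuous_circleMap w t).measurable
        _ ≤ _ := lintegral_mono_set Set.Ioo_subset_Ioi_self
    · apply Measurable.aemeasurable
      simp only [smul_eq_mul]
      apply Measurable.mul (by fun_prop)
      exact hmeas.comp (Real.circleMap.continuous (c := w)).measurable
  exact absurd hv (not_lt.2 hle)

open MeasureTheory Filter in
lemma hk_hartogs (g : ℕ → ℂ → ℂ) (b : ℂ) (R A q : ℝ) (hR : 0 < R) (hA : 1 < A) (hq : 1 < q)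
    (hg : ∀ n, DifferentiableOn ℂ (g n) (Metric.ball b R))
    (hb : ∀ n, 1 ≤ n → ∀ w ∈ Metric.ball b R, ‖g n w‖ ≤ A ^ n)
    (hp : ∀ w ∈ Metric.ball b R, ∃ C, ∀ n, ‖g n w‖ ≤ C) :
    ∃ N, ∀ n ≥ N, ∀ w ∈ Metric.ball b (R / 2), ‖g n w‖ ≤ q ^ n := by
  have hlogA := Real.log_pos hA
  have hlogq := Real.log_pos hq
  let s := Real.exp (Real.log q / 2)
  have hs : 1 < s := Real.one_lt_exp_iff.2 (by linarith)
  have hlogs : Real.log s = Real.log q / 2 := Real.log_exp _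
  let O : ℕ → Set ℂ := fun n => Metric.ball b R ∩ {w | s ^ n < ‖g n w‖}
  have hO : ∀ n, IsOpen (O n) := fun n =>
    ((hg n).continuousOn.norm).isOpen_inter_preimage Metric.isOpen_ball isOpen_Ioi
  let E : ℕ → Set ℂ := fun N => ⋃ n ≥ N, O n
  have hE : ∀ N, MeasurableSet (E N) := fun N =>
    (isOpen_iUnion fun n => isOpen_iUnion fun _ => hO n).measurableSet
  have hEb : ∀ N, E N ⊆ Metric.ball b R := fun N =>
    Set.iUnion_subset fun n => Set.iUnion_subset fun _ => Set.inter_subset_left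
  have hanti : Antitone E := by
    intro m n hmn x hx
    simp only [E, Set.mem_iUnion] at hx ⊢
    obtain ⟨i, hi, hx⟩ := hx
    exact ⟨i, le_trans hmn hi, hx⟩
  have hemp : ⋂ N, E N = ∅ := by
    rw [Set.eq_empty_iff_forall_notMem]
    intro x hx
    rw [Set.mem_iInter] at hx
    obtain ⟨C, hC⟩ := hp x (hEb 0 (hx 0))
    obtain ⟨N, hN⟩ := pow_unbounded_of_one_lt C hs
    have h := hx N
    simp only [E, Set.mem_iUnion] at h
    obtain ⟨i, hi, hx⟩ := h
    have h1 : s ^ i < ‖g i x‖ := hx.2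
    have h2 : s ^ N ≤ s ^ i := pow_le_pow_right₀ hs.le hi
    linarith [hC i]
  have htend := tendsto_measure_iInter_atTop (μ := (volume : Measure ℂ))
    (fun N => (hE N).nullMeasurableSet) hanti
    ⟨0, ((measure_mono (hEb 0)).trans_lt measure_ball_lt_top).ne⟩
  rw [hemp, measure_empty] at htend
  let κ := Real.log q / (2 * Real.log A)
  have hκ : 0 < κ := by positivity
  have hpos : 0 < ENNReal.ofReal (Real.pi * (R / 2) ^ 2 * κ) :=
    ENNReal.ofReal_pos.2 (by have := Real.pi_pos; positivity)
  obtain ⟨N, hN⟩ := ((htend.eventually_lt_const hpos)).exists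
  refine ⟨max N 1, fun n hn w hw => ?_⟩
  have hnN : N ≤ n := le_trans (le_max_left _ _) hn
  have hn1 : 1 ≤ n := le_trans (le_max_right _ _) hn
  by_cases h0 : g n w = 0
  · rw [h0, norm_zero]; positivity
  obtain ⟨t, ht, htR, hav⟩ := hk_circle (E N) (hE N) w (R / 2) κ (by positivity) hκ hN
  have hsub : Metric.closedBall w t ⊆ Metric.ball b R := by
    apply Metric.closedBall_subset_ball'
    rw [Metric.mem_ball] at hw
    linarith
  have han : AnalyticOnNhd ℂ (g n) (Metric.closedBall w t) :=
    ((hg n).analyticOnNhd Metric.isOpen_ball).mono hsub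
  have hj := hk_jensen ht han h0
  have hind : CircleIntegrable ((E N).indicator (fun _ => (1 : ℝ))) w t := by
    unfold CircleIntegrable
    rw [intervalIntegrable_iff]
    apply Measure.integrableOn_of_bounded (M := 1)
    · rw [Set.uIoc_of_le (by positivity)]; exact measure_Ioc_lt_top.ne
    · exact ((measurable_const.indicator (hE N)).comp
        (continuous_circleMap w t).measurable).aestronglyMeasurable
    · refine Filter.Eventually.of_forall fun θ => ?_
      by_cases h : circleMap w t θ ∈ E N <;> simp [h]
  have hci : CircleIntegrable (fun z => (n * Real.log s) + (n * Real.log A) *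
      (E N).indicator (fun _ => (1 : ℝ)) z) w t := by
    apply CircleIntegrable.add (circleIntegrable_const _ _ _)
    exact hind.const_smul (a := n * Real.log A)
  have hmono : Real.circleAverage (fun z => Real.log ‖g n z‖) w t ≤
      Real.circleAverage (fun z => (n * Real.log s) + (n * Real.log A) *
      (E N).indicator (fun _ => (1 : ℝ)) z) w t := by
    apply Real.circleAverage_mono _ hci
    · intro z hz
      rw [abs_of_pos ht] at hz
      have hzb : z ∈ Metric.ball b R := hsub (Metric.sphere_subset_closedBall hz)
      have hnn : 0 ≤ n * Real.log s := by
        have := Real.log_pos hs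
        positivity
      by_cases hz0 : g n z = 0
      · simp only [hz0, norm_zero, Real.log_zero]
        have : 0 ≤ (E N).indicator (fun _ => (1 : ℝ)) z :=
          Set.indicator_nonneg (fun _ _ => zero_le_one) _
        positivity
      have hzp : 0 < ‖g n z‖ := norm_pos_iff.2 hz0
      by_cases hzE : z ∈ E N
      · simp only [hzE, Set.indicator_of_mem, mul_one]
        have := Real.log_le_log hzp (hb n hn1 z hzb)
        rw [Real.log_pow] at this
        linarith
      · simp only [hzE, not_false_eq_true, Set.indicator_of_notMem, mul_zero, add_zero]
        rw [← Real.log_pow]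
        apply Real.log_le_log hzp
        by_contra! hlt
        apply hzE
        simp only [E, Set.mem_iUnion]
        exact ⟨n, hnN, hzb, hlt⟩
    · apply MeromorphicOn.circleIntegrable_log_norm
      rw [abs_of_pos ht]
      exact (han.mono Metric.sphere_subset_closedBall).meromorphicOn
  have heq : Real.circleAverage (fun z => (n * Real.log s) + (n * Real.log A) *
      (E N).indicator (fun _ => (1 : ℝ)) z) w t = (n * Real.log s) + (n * Real.log A) *
      Real.circleAverage ((E N).indicator (fun _ => (1 : ℝ))) w t := by
    have h1 := Real.circleAverage_fun_add (circleIntegrable_const (n * Real.log s) w t)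
      (hind.const_smul (a := n * Real.log A))
    have h2 := Real.circleAverage_smul (a := n * Real.log A) (c := w) (R := t)
      (f := ((E N).indicator (fun _ => (1 : ℝ))))
    rw [Real.circleAverage_const, h2] at h1
    exact h1
  have hfin : Real.log ‖g n w‖ ≤ n * Real.log q := by
    calc _ ≤ (n * Real.log s) + (n * Real.log A) * κ := by
          rw [heq] at hmono
          refine (hj.trans hmono).trans ?_
          gcongr
      _ = n * Real.log q := by
          rw [hlogs]; simp only [κ]; field_simp; ring
  rw [← Real.log_pow] at hfin
  exact (Real.log_le_log_iff (norm_pos_iff.2 h0) (by positivity)).1 hfin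

open BoundedContinuousFunction in
lemma hk_unit {X : Type*} [TopologicalSpace X] (f : X →ᵇ ℂ) (δ : ℝ) (hδ : 0 < δ)
    (h : ∀ x, δ ≤ ‖f x‖) : IsUnit f := by
  have hne : ∀ x, f x ≠ 0 := fun x hx => by
    have := h x
    rw [hx, norm_zero] at this
    linarith
  let g : X →ᵇ ℂ := BoundedContinuousFunction.ofNormedAddCommGroup (fun x => (f x)⁻¹)
    (f.continuous.inv₀ hne) δ⁻¹ (fun x => by
      rw [norm_inv]
      exact inv_anti₀ hδ (h x))
  refine IsUnit.of_mul_eq_one g ?_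
  ext x
  exact mul_inv_cancel₀ (hne x)

open BoundedContinuousFunction in
lemma hk_inv_apply {X : Type*} [TopologicalSpace X] (f : X →ᵇ ℂ) (hf : IsUnit f) (x : X) :
    (Ring.inverse f) x = (f x)⁻¹ := by
  have h := Ring.inverse_mul_cancel f hf
  have h2 : (Ring.inverse f) x * f x = 1 := by
    have := congrArg (fun g : X →ᵇ ℂ => g x) h
    exact this
  exact eq_inv_of_mul_eq_one_left h2

open BoundedContinuousFunction MeasureTheory in
lemma hk_integral_analytic (μ : Measure (ℝ × ℝ)) [IsFiniteMeasure μ]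
    (G U V : (ℝ × ℝ) →ᵇ ℂ) (p₀ : ℂ × ℂ) (δ : ℝ) (hδ : 0 < δ)
    (hU : ∀ x, δ ≤ ‖U x - p₀.1‖) (hV : ∀ x, δ ≤ ‖V x - p₀.2‖) :
    AnalyticAt ℂ (fun p : ℂ × ℂ => ∫ x, G x * ((U x - p.1)⁻¹ * (V x - p.2)⁻¹) ∂μ) p₀ := by
  let L : ((ℝ × ℝ) →ᵇ ℂ) →L[ℂ] ℂ := LinearMap.mkContinuous
    { toFun := fun g => ∫ x, g x ∂μ
      map_add' := fun f g => integral_add (f.integrable μ) (g.integrable μ)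
      map_smul' := fun c f => integral_const_mul c _ } (μ.real Set.univ)
    (fun f => f.norm_integral_le_mul_norm μ)
  have hL : ∀ g, L g = ∫ x, g x ∂μ := fun g => rfl
  let u : ℂ × ℂ → ((ℝ × ℝ) →ᵇ ℂ) := fun p => U - p.1 • 1
  let v : ℂ × ℂ → ((ℝ × ℝ) →ᵇ ℂ) := fun p => V - p.2 • 1
  have hua : ∀ p x, u p x = U x - p.1 := fun p x => by simp [u]
  have hva : ∀ p x, v p x = V x - p.2 := fun p x => by simp [v]
  have hu : AnalyticAt ℂ u p₀ := analyticAt_const.sub (analyticAt_fst.smul analyticAt_const)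
  have hv : AnalyticAt ℂ v p₀ := analyticAt_const.sub (analyticAt_snd.smul analyticAt_const)
  have huU : IsUnit (u p₀) := hk_unit _ δ hδ (fun x => by rw [hua]; exact hU x)
  have hvU : IsUnit (v p₀) := hk_unit _ δ hδ (fun x => by rw [hva]; exact hV x)
  have hiu : AnalyticAt ℂ (fun p => Ring.inverse (u p)) p₀ := by
    obtain ⟨y, hy⟩ := huU
    exact AnalyticAt.comp (g := Ring.inverse) (hy ▸ analyticAt_inverse (𝕜 := ℂ) y) hu
  have hiv : AnalyticAt ℂ (fun p => Ring.inverse (v p)) p₀ := by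
    obtain ⟨y, hy⟩ := hvU
    exact AnalyticAt.comp (g := Ring.inverse) (hy ▸ analyticAt_inverse (𝕜 := ℂ) y) hv
  have hmain : AnalyticAt ℂ (fun p => L (G * (Ring.inverse (u p) * Ring.inverse (v p)))) p₀ :=
    (L.analyticAt _).comp (analyticAt_const.mul (hiu.mul hiv))
  refine hmain.congr ?_
  have e1 : ∀ᶠ p in nhds p₀, IsUnit (u p) :=
    hu.continuousAt.eventually (Units.isOpen.mem_nhds huU)
  have e2 : ∀ᶠ p in nhds p₀, IsUnit (v p) :=
    hv.continuousAt.eventually (Units.isOpen.mem_nhds hvU)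
  filter_upwards [e1, e2] with p h1 h2
  rw [hL]
  congr 1
  ext x
  rw [BoundedContinuousFunction.mul_apply, BoundedContinuousFunction.mul_apply, hk_inv_apply _ h1,
    hk_inv_apply _ h2, hua, hva]

open MeasureTheory BoundedContinuousFunction in
lemma hk_osgood (F : ℂ → ℂ → ℂ) (a b : ℂ) (ρ M : ℝ) (hρ : 0 < ρ)
    (h1 : ∀ w ∈ Metric.ball b ρ, DifferentiableOn ℂ (fun z => F z w) (Metric.ball a ρ))
    (h2 : ∀ z ∈ Metric.ball a ρ, DifferentiableOn ℂ (fun w => F z w) (Metric.ball b ρ))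
    (hM : ∀ z ∈ Metric.ball a ρ, ∀ w ∈ Metric.ball b ρ, ‖F z w‖ ≤ M) :
    AnalyticAt ℂ (fun p : ℂ × ℂ => F p.1 p.2) (a, b) := by
  have hM0 : 0 ≤ M := (norm_nonneg _).trans
    (hM a (Metric.mem_ball_self hρ) b (Metric.mem_ball_self hρ))
  have hcont : ContinuousOn (fun p : ℂ × ℂ => F p.1 p.2)
      (Metric.ball a (ρ / 2) ×ˢ Metric.ball b ρ) := by
    apply continuousOn_prod_of_continuousOn_lipschitzOnWith _ (Real.toNNReal (M / (ρ / 4)))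
    · intro z hz
      exact (h2 z (Metric.ball_subset_ball (by linarith) hz)).continuousOn
    · intro w hw
      apply (convex_ball a (ρ / 2)).lipschitzOnWith_of_nnnorm_deriv_le (𝕜 := ℂ)
      · intro z hz
        exact (h1 w hw).differentiableAt (Metric.isOpen_ball.mem_nhds
          (Metric.ball_subset_ball (by linarith) hz))
      · intro z hz
        have hsub : Metric.closedBall z (ρ / 4) ⊆ Metric.ball a ρ := by
          apply Metric.closedBall_subset_ball'
          rw [Metric.mem_ball] at hz
          linarith
        rw [← NNReal.coe_le_coe, coe_nnnorm, Real.coe_toNNReal _ (by positivity)]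
        apply norm_deriv_le_of_forall_mem_sphere_norm_le (by positivity)
        · exact ((h1 w hw).mono (Metric.closure_ball_subset_closedBall.trans hsub)).diffContOnCl
        · intro y hy
          exact hM y (hsub (Metric.sphere_subset_closedBall hy)) w hw
  let s := ρ / 4
  have hs : 0 < s := by positivity
  have hu1 : ∀ θ, circleMap a s θ ∈ Metric.ball a (ρ / 2) := fun θ =>
    Metric.closedBall_subset_ball (by simp only [s]; linarith)
      (circleMap_mem_closedBall a hs.le θ)
  have hu2 : ∀ θ, circleMap a s θ ∈ Metric.ball a ρ := fun θ =>
    Metric.ball_subset_ball (by linarith) (hu1 θ)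
  have hv2 : ∀ θ, circleMap b s θ ∈ Metric.ball b ρ := fun θ =>
    Metric.closedBall_subset_ball (by simp only [s]; linarith)
      (circleMap_mem_closedBall b hs.le θ)
  have hsubA : Metric.closedBall a s ⊆ Metric.ball a ρ :=
    Metric.closedBall_subset_ball (by simp only [s]; linarith)
  have hsubB : Metric.closedBall b s ⊆ Metric.ball b ρ :=
    Metric.closedBall_subset_ball (by simp only [s]; linarith)
  have hbd : ∀ (c : ℂ) (t : ℝ) (θ : ℝ), ‖circleMap c t θ‖ ≤ ‖c‖ + |t| := by
    intro c t θ
    refine (norm_add_le _ _).trans ?_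
    simp
  let U : (ℝ × ℝ) →ᵇ ℂ := BoundedContinuousFunction.ofNormedAddCommGroup
    (fun x => circleMap a s x.1) (by fun_prop) (‖a‖ + |s|) (fun x => hbd _ _ _)
  let V : (ℝ × ℝ) →ᵇ ℂ := BoundedContinuousFunction.ofNormedAddCommGroup
    (fun x => circleMap b s x.2) (by fun_prop) (‖b‖ + |s|) (fun x => hbd _ _ _)
  let D : (ℝ × ℝ) →ᵇ ℂ := BoundedContinuousFunction.ofNormedAddCommGroup
    (fun x => circleMap 0 s x.1) (by fun_prop) (‖(0 : ℂ)‖ + |s|) (fun x => hbd _ _ _)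
  let D' : (ℝ × ℝ) →ᵇ ℂ := BoundedContinuousFunction.ofNormedAddCommGroup
    (fun x => circleMap 0 s x.2) (by fun_prop) (‖(0 : ℂ)‖ + |s|) (fun x => hbd _ _ _)
  have hFc : Continuous (fun x : ℝ × ℝ => F (circleMap a s x.1) (circleMap b s x.2)) := by
    have := hcont.comp_continuous
      (f := fun x : ℝ × ℝ => (circleMap a s x.1, circleMap b s x.2)) (by fun_prop)
      (fun x => ⟨hu1 _, hv2 _⟩)
    exact this
  let G₀ : (ℝ × ℝ) →ᵇ ℂ := BoundedContinuousFunction.ofNormedAddCommGroup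
    (fun x => F (circleMap a s x.1) (circleMap b s x.2)) hFc M
    (fun x => hM _ (hu2 _) _ (hv2 _))
  let G : (ℝ × ℝ) →ᵇ ℂ := D * D' * G₀
  let ν : Measure ℝ := volume.restrict (Set.Ioc 0 (2 * Real.pi))
  have hana := hk_integral_analytic (ν.prod ν) G U V (a, b) s hs
    (fun x => by simp [U, abs_of_pos hs]) (fun x => by simp [V, abs_of_pos hs])
  let c : ℂ := (2 * Real.pi * I)⁻¹
  have hana2 := (analyticAt_const (𝕜 := ℂ) (v := c * c * I * I) (x := ((a, b) : ℂ × ℂ))).mul hana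
  refine hana2.congr ?_
  have hnb : Metric.ball a s ×ˢ Metric.ball b s ∈ nhds (a, b) :=
    prod_mem_nhds (Metric.ball_mem_nhds a hs) (Metric.ball_mem_nhds b hs)
  filter_upwards [hnb] with p hp
  have hb1 : F p.1 p.2 = c * ∮ z in C(a, s), (z - p.1)⁻¹ * F z p.2 := by
    have := (((h1 p.2 (hsubB (Metric.ball_subset_closedBall hp.2))).mono
      (Metric.closure_ball_subset_closedBall.trans hsubA)).diffContOnCl
      ).two_pi_i_inv_smul_circleIntegral_sub_inv_smul hp.1
    simpa [c, smul_eq_mul] using this.symm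
  have hb2 : ∀ θ, F (circleMap a s θ) p.2 =
      c * ∮ w in C(b, s), (w - p.2)⁻¹ * F (circleMap a s θ) w := by
    intro θ
    have := (((h2 _ (hu2 θ)).mono
      (Metric.closure_ball_subset_closedBall.trans hsubB)).diffContOnCl
      ).two_pi_i_inv_smul_circleIntegral_sub_inv_smul hp.2
    simpa [c, smul_eq_mul] using this.symm
  have hpi : (0 : ℝ) ≤ 2 * Real.pi := by positivity
  have hUp : IsUnit (U - p.1 • 1 : (ℝ × ℝ) →ᵇ ℂ) := by
    apply hk_unit _ (s - dist p.1 a) (by linarith [Metric.mem_ball.1 hp.1])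
    intro x
    have : (U - p.1 • 1 : (ℝ × ℝ) →ᵇ ℂ) x = circleMap a s x.1 - p.1 := by simp [U]
    rw [this, ← dist_eq_norm]
    have h3 := dist_triangle_right (circleMap a s x.1) a p.1
    have h4 : dist (circleMap a s x.1) a = s := circleMap_mem_sphere a hs.le x.1
    have h5 := dist_triangle (circleMap a s x.1) p.1 a
    linarith
  have hVp : IsUnit (V - p.2 • 1 : (ℝ × ℝ) →ᵇ ℂ) := by
    apply hk_unit _ (s - dist p.2 b) (by linarith [Metric.mem_ball.1 hp.2])
    intro x
    have : (V - p.2 • 1 : (ℝ × ℝ) →ᵇ ℂ) x = circleMap b s x.2 - p.2 := by simp [V]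
    rw [this, ← dist_eq_norm]
    have h4 : dist (circleMap b s x.2) b = s := circleMap_mem_sphere b hs.le x.2
    have h5 := dist_triangle (circleMap b s x.2) p.2 b
    linarith
  have hint : Integrable (fun x => G x * ((U x - p.1)⁻¹ * (V x - p.2)⁻¹)) (ν.prod ν) := by
    have := (G * (Ring.inverse (U - p.1 • 1 : (ℝ × ℝ) →ᵇ ℂ)
      * Ring.inverse (V - p.2 • 1 : (ℝ × ℝ) →ᵇ ℂ))).integrable (ν.prod ν)
    refine this.congr (Filter.Eventually.of_forall fun x => ?_)
    simp only [BoundedContinuousFunction.mul_apply, hk_inv_apply _ hUp, hk_inv_apply _ hVp]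
    simp
  simp only [Pi.mul_apply]
  rw [integral_prod _ hint]
  rw [hb1]
  simp only [circleIntegral, deriv_circleMap, smul_eq_mul] at hb2 ⊢
  simp_rw [hb2]
  rw [intervalIntegral.integral_of_le hpi]
  simp_rw [intervalIntegral.integral_of_le hpi]
  rw [← integral_const_mul, ← integral_const_mul]
  apply integral_congr_ae
  refine Filter.Eventually.of_forall fun θ => ?_
  simp only
  simp_rw [← integral_const_mul]
  apply integral_congr_ae
  refine Filter.Eventually.of_forall fun φ => ?_
  simp only [G, U, V, D, D', G₀, BoundedContinuousFunction.mul_apply,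
    BoundedContinuousFunction.coe_ofNormedAddCommGroup]
  ring
lemma hk_iter (G : ℂ × ℂ → ℂ) (S : Set (ℂ × ℂ)) (hG : AnalyticOnNhd ℂ G S) (n : ℕ) :
    AnalyticOnNhd ℂ (fun p : ℂ × ℂ => iteratedDeriv n (fun z => G (z, p.2)) p.1) S := by
  induction n with
  | zero => simpa using hG
  | succ n ih =>
    intro p hp
    have h1 := ih.fderiv p hp
    have h2 : AnalyticAt ℂ (fun q => fderiv ℂ (fun p : ℂ × ℂ =>
        iteratedDeriv n (fun z => G (z, p.2)) p.1) q ((1, 0) : ℂ × ℂ)) p :=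
      ((ContinuousLinearMap.apply ℂ ℂ ((1, 0) : ℂ × ℂ)).analyticAt _).comp h1
    refine h2.congr ?_
    filter_upwards [(ih p hp).eventually_analyticAt] with q hq
    rw [iteratedDeriv_succ]
    have h3 : HasDerivAt (fun z : ℂ => ((z, q.2) : ℂ × ℂ)) (1, 0) q.1 :=
      (hasDerivAt_id q.1).prodMk (hasDerivAt_const q.1 q.2)
    have h4 := (hq.differentiableAt.hasFDerivAt (x := (q.1, q.2))).comp_hasDerivAt q.1 h3
    exact h4.deriv.symm

lemma hk_baire (F : ℂ → ℂ → ℂ) (a b : ℂ) (R : ℝ) (hR : 0 < R)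
    (h1 : ∀ w ∈ Metric.closedBall b R, ContinuousOn (fun z => F z w) (Metric.closedBall a R))
    (h2 : ∀ z ∈ Metric.closedBall a R, ContinuousOn (fun w => F z w) (Metric.closedBall b R)) :
    ∃ z₀ ∈ Metric.ball a R, ∃ r > 0, ∃ M : ℝ, 0 ≤ M ∧ Metric.ball z₀ r ⊆ Metric.ball a R ∧
      ∀ z ∈ Metric.ball z₀ r, ∀ w ∈ Metric.closedBall b R, ‖F z w‖ ≤ M := by
  let E : ℕ → Set ℂ := fun n =>
    ⋂ w ∈ Metric.closedBall b R, Metric.closedBall a R ∩ {z | ‖F z w‖ ≤ n}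
  have hbn : b ∈ Metric.closedBall b R := Metric.mem_closedBall_self hR.le
  have hE : ∀ n, IsClosed (E n) := fun n => isClosed_biInter fun w hw =>
    (h1 w hw).norm.preimage_isClosed_of_isClosed Metric.isClosed_closedBall isClosed_Iic
  have hd := dense_iUnion_interior_of_closed
    (f := fun n => E n ∪ (Metric.ball a R)ᶜ)
    (fun n => (hE n).union Metric.isOpen_ball.isClosed_compl) (by
      rw [Set.eq_univ_iff_forall]
      intro z
      rw [Set.mem_iUnion]
      by_cases hz : z ∈ Metric.ball a R
      · have hz' := Metric.ball_subset_closedBall hz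
        obtain ⟨C, hC⟩ := (isCompact_closedBall b R).exists_bound_of_continuousOn (h2 z hz')
        obtain ⟨n, hn⟩ := exists_nat_ge C
        refine ⟨n, Or.inl ?_⟩
        simp only [E, Set.mem_iInter]
        exact fun w hw => ⟨hz', (hC w hw).trans hn⟩
      · exact ⟨0, Or.inr hz⟩)
  obtain ⟨z₀, hz₀, hz₀'⟩ := hd.exists_mem_open Metric.isOpen_ball ⟨a, Metric.mem_ball_self hR⟩
  rw [Set.mem_iUnion] at hz₀
  obtain ⟨n, hn⟩ := hz₀
  obtain ⟨r, hr, hsub⟩ := Metric.isOpen_iff.1 (isOpen_interior.inter Metric.isOpen_ball) z₀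
    ⟨hn, hz₀'⟩
  refine ⟨z₀, hz₀', r, hr, n, Nat.cast_nonneg n, fun z hz => (hsub hz).2, fun z hz w hw => ?_⟩
  rcases interior_subset (hsub hz).1 with h | h
  · simp only [E, Set.mem_iInter] at h
    exact (h w hw).2
  · exact absurd (hsub hz).2 h

lemma hk_main (F : ℂ → ℂ → ℂ) (U V : Set ℂ) (hU : IsOpen U) (hV : IsOpen V)
    (h1 : ∀ w ∈ V, DifferentiableOn ℂ (fun z => F z w) U)
    (h2 : ∀ z ∈ U, DifferentiableOn ℂ (fun w => F z w) V) (a b : ℂ) (ha : a ∈ U) (hb : b ∈ V) :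
    AnalyticAt ℂ (fun p : ℂ × ℂ => F p.1 p.2) (a, b) := by
  obtain ⟨ε₁, hε₁, hs1⟩ := Metric.isOpen_iff.1 hU a ha
  obtain ⟨ε₂, hε₂, hs2⟩ := Metric.isOpen_iff.1 hV b hb
  obtain ⟨R, hR, hR1, hR2⟩ : ∃ R > 0, 4 * R ≤ ε₁ ∧ 4 * R ≤ ε₂ :=
    ⟨min ε₁ ε₂ / 4, by positivity, by linarith [min_le_left ε₁ ε₂],
      by linarith [min_le_right ε₁ ε₂]⟩
  have hUa : Metric.closedBall a (3 * R) ⊆ U :=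
    (Metric.closedBall_subset_ball (by linarith)).trans hs1
  have hVb : Metric.closedBall b R ⊆ V :=
    (Metric.closedBall_subset_ball (by linarith)).trans hs2
  have hUa1 : Metric.closedBall a R ⊆ U :=
    (Metric.closedBall_subset_closedBall (by linarith)).trans hUa
  obtain ⟨z₀, hz₀, r, hr, M, hM0, hrsub, hM⟩ := hk_baire F a b R hR
    (fun w hw => (h1 w (hVb hw)).continuousOn.mono hUa1)
    (fun z hz => (h2 z (hUa1 hz)).continuousOn.mono hVb)
  have hVb' : Metric.ball b R ⊆ V := Metric.ball_subset_closedBall.trans hVb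
  have hrU : Metric.ball z₀ r ⊆ U := hrsub.trans (Metric.ball_subset_closedBall.trans hUa1)
  have hz₀d : dist z₀ a < R := hz₀
  have h2R : Metric.closedBall z₀ (2 * R) ⊆ U :=
    (Metric.closedBall_subset_closedBall' (by linarith)).trans hUa
  have hsmall : AnalyticOnNhd ℂ (fun p : ℂ × ℂ => F p.1 p.2)
      (Metric.ball z₀ r ×ˢ Metric.ball b R) := by
    rintro ⟨z, w⟩ ⟨hz, hw⟩
    obtain ⟨e1, he1, hb1⟩ := Metric.isOpen_iff.1 Metric.isOpen_ball z hz
    obtain ⟨e2, he2, hb2⟩ := Metric.isOpen_iff.1 Metric.isOpen_ball w hw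
    have i1 := (Metric.ball_subset_ball (min_le_left e1 e2)).trans hb1
    have i2 := (Metric.ball_subset_ball (min_le_right e1 e2)).trans hb2
    exact hk_osgood F z w (min e1 e2) M (lt_min he1 he2)
      (fun w' hw' => (h1 w' (hVb' (i2 hw'))).mono (i1.trans hrU))
      (fun z' hz' => (h2 z' (hrU (i1 hz'))).mono (i2.trans hVb'))
      (fun z' hz' w' hw' => hM z' (i1 hz') w' (Metric.ball_subset_closedBall (i2 hw')))
  let g : ℕ → ℂ → ℂ := fun n w =>
    ((n.factorial : ℂ)⁻¹ * (2 * R : ℂ) ^ n) * iteratedDeriv n (fun z => F z w) z₀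
  have hgd : ∀ n, DifferentiableOn ℂ (g n) (Metric.ball b R) := by
    intro n w hw
    have h := hk_iter _ _ hsmall n (z₀, w) ⟨Metric.mem_ball_self hr, hw⟩
    have h3 : DifferentiableAt ℂ (fun w : ℂ => ((z₀, w) : ℂ × ℂ)) w := by fun_prop
    have h4 := DifferentiableAt.comp w h.differentiableAt h3
    exact (h4.const_mul _).differentiableWithinAt
  have hgest : ∀ (w : ℂ) (C s : ℝ), 0 < s →
      DifferentiableOn ℂ (fun z => F z w) (Metric.closedBall z₀ s) →
      (∀ z ∈ Metric.closedBall z₀ s, ‖F z w‖ ≤ C) → ∀ n, ‖g n w‖ ≤ C * (2 * R / s) ^ n := by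
    intro w C s hs hd hC n
    have h := norm_iteratedDeriv_le_of_forall_mem_sphere_norm_le n hs
      ((hd.mono Metric.closure_ball_subset_closedBall).diffContOnCl)
      (fun z hz => hC z (Metric.sphere_subset_closedBall hz))
    have hfac : (0 : ℝ) < n.factorial := by exact_mod_cast n.factorial_pos
    have hn2 : ‖(2 * R : ℂ)‖ = 2 * R := by simp [abs_of_pos hR]
    calc ‖g n w‖ = ((n.factorial : ℝ)⁻¹ * (2 * R) ^ n)
            * ‖iteratedDeriv n (fun z => F z w) z₀‖ := by
          simp only [g, norm_mul, norm_inv, norm_pow]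
          simp [abs_of_pos hR]
      _ ≤ ((n.factorial : ℝ)⁻¹ * (2 * R) ^ n) * (n.factorial * C / s ^ n) := by gcongr
      _ = C * (2 * R / s) ^ n := by
          rw [div_pow]; field_simp
  have hsubr : Metric.closedBall z₀ (r / 2) ⊆ Metric.ball z₀ r :=
    Metric.closedBall_subset_ball (by linarith)
  have hg1 : ∀ n, ∀ w ∈ Metric.ball b R, ‖g n w‖ ≤ M * (2 * R / (r / 2)) ^ n := fun n w hw =>
    hgest w M (r / 2) (by positivity) ((h1 w (hVb' hw)).mono (hsubr.trans hrU))
      (fun z hz => hM z (hsubr hz) w (Metric.ball_subset_closedBall hw)) n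
  let x := 2 * R / (r / 2)
  have hx : 0 < x := by positivity
  let A := (M + 1) * (x + 1)
  have hA : 1 < A := by simp only [A]; nlinarith
  have hg2 : ∀ n, ∀ w ∈ Metric.ball b R, ‖g n w‖ ≤ (M + 1) * A ^ n := by
    intro n w hw
    refine (hg1 n w hw).trans ?_
    have : x ≤ A := by simp only [A]; nlinarith
    have h5 : x ^ n ≤ A ^ n := by gcongr
    have h6 : (0 : ℝ) ≤ x ^ n := by positivity
    calc M * x ^ n ≤ (M + 1) * x ^ n := by gcongr; linarith
      _ ≤ _ := by gcongr
  obtain ⟨N, hN⟩ := hk_hartogs g b R A (3 / 2) hR hA (by norm_num) hgd (by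
      intro n hn w hw
      refine (hg1 n w hw).trans ?_
      have h5 : M ≤ (M + 1) ^ n := by
        calc M ≤ M + 1 := by linarith
          _ = (M + 1) ^ 1 := by ring
          _ ≤ (M + 1) ^ n := pow_le_pow_right₀ (by linarith) hn
      have h6 : x ^ n ≤ (x + 1) ^ n := by gcongr; linarith
      simp only [A, mul_pow]
      gcongr)
    (by
      intro w hw
      have hd := (h1 w (hVb' hw)).mono h2R
      obtain ⟨C, hC⟩ := (isCompact_closedBall z₀ (2 * R)).exists_bound_of_continuousOn
        hd.continuousOn
      refine ⟨C, fun n => ?_⟩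
      have := hgest w C (2 * R) (by positivity) hd hC n
      rwa [div_self (by positivity), one_pow, mul_one] at this)
  let K := (M + 1) * A ^ N
  have hK1 : 1 ≤ K := by
    have : 1 ≤ A ^ N := one_le_pow₀ hA.le
    simp only [K]; nlinarith
  have hbound : ∀ z ∈ Metric.ball z₀ R, ∀ w ∈ Metric.ball b (R / 2), ‖F z w‖ ≤ K * 4 := by
    intro z hz w hw
    have hwR : w ∈ Metric.ball b R := Metric.ball_subset_ball (by linarith) hw
    have hsum := hasSum_taylorSeries_on_ball (f := fun z => F z w) (c := z₀) (r := 2 * R) (z := z)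
      ((h1 w (hVb' hwR)).mono (Metric.ball_subset_closedBall.trans h2R))
      (Metric.ball_subset_ball (by linarith) hz)
    have hgeo : HasSum (fun n : ℕ => K * (3 / 4 : ℝ) ^ n) (K * 4) := by
      have := hasSum_geometric_of_lt_one (r := (3 / 4 : ℝ)) (by norm_num) (by norm_num)
      have h4 : (1 - 3 / 4 : ℝ)⁻¹ = 4 := by norm_num
      rw [h4] at this
      exact this.mul_left K
    rw [← hsum.tsum_eq]
    refine tsum_of_norm_bounded hgeo fun n => ?_
    have hRne : (R : ℂ) ≠ 0 := by exact_mod_cast hR.ne'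
    have hterm : (n.factorial : ℂ)⁻¹ • (z - z₀) ^ n • iteratedDeriv n (fun z => F z w) z₀
        = g n w * ((z - z₀) / (2 * R)) ^ n := by
      simp only [g, smul_eq_mul, div_pow]
      field_simp
    have hzn : ‖(z - z₀) / (2 * R)‖ ≤ 1 / 2 := by
      rw [Metric.mem_ball, dist_eq_norm] at hz
      rw [norm_div, norm_mul, Complex.norm_real, Real.norm_of_nonneg hR.le, div_le_iff₀ (by simp [hR])]
      simp
      linarith
    have hgn : ‖g n w‖ ≤ K * (3 / 2) ^ n := by
      have hq : (1 : ℝ) ≤ (3 / 2) ^ n := one_le_pow₀ (by norm_num)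
      rcases le_or_gt N n with h | h
      · have := hN n h w hw
        nlinarith
      · have h7 := hg2 n w hwR
        have h8 : A ^ n ≤ A ^ N := pow_le_pow_right₀ hA.le h.le
        have h9 : (M + 1) * A ^ n ≤ K := by simp only [K]; gcongr
        nlinarith
    rw [hterm, norm_mul, norm_pow]
    calc ‖g n w‖ * ‖(z - z₀) / (2 * R)‖ ^ n ≤ (K * (3 / 2) ^ n) * (1 / 2) ^ n := by gcongr
      _ = K * (3 / 4) ^ n := by rw [mul_assoc, ← mul_pow]; norm_num
  let ρ := min (R - dist a z₀) (R / 2)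
  have hρ : 0 < ρ := lt_min (by rw [dist_comm]; linarith) (by positivity)
  have i1 : Metric.ball a ρ ⊆ Metric.ball z₀ R :=
    Metric.ball_subset_ball' (by linarith [min_le_left (R - dist a z₀) (R / 2)])
  have i2 : Metric.ball b ρ ⊆ Metric.ball b (R / 2) := Metric.ball_subset_ball (min_le_right _ _)
  have i3 : Metric.ball a ρ ⊆ U := i1.trans
    ((Metric.ball_subset_closedBall.trans (Metric.closedBall_subset_closedBall (by linarith))).trans h2R)
  have i4 : Metric.ball b ρ ⊆ V := i2.trans ((Metric.ball_subset_ball (by linarith)).trans hVb')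
  exact hk_osgood F a b ρ (K * 4) hρ (fun w hw => (h1 w (i4 hw)).mono i3)
    (fun z hz => (h2 z (i3 hz)).mono i4) (fun z hz w hw => hbound z (i1 hz) w (i2 hw))

theorem kernel_jointly_analytic (Ω : Set ℂ) (hΩ : IsOpen Ω) (k : ℂ → ℂ → ℂ)
    (hAnalytic : ∀ ω ∈ Ω, AnalyticOn ℂ (fun z : ℂ => k z ω) Ω)
    (hSym : ∀ z ∈ Ω, ∀ ω ∈ Ω, k z ω = conj (k ω z)) :
    AnalyticOn ℂ (fun p : ℂ × ℂ => k p.1 (conj p.2))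
      (Ω ×ˢ ((fun w : ℂ => conj w) '' Ω)) := by
  have himg : (fun w : ℂ => conj w) '' Ω = (fun w : ℂ => conj w) ⁻¹' Ω := by
    ext w
    constructor
    · rintro ⟨v, hv, rfl⟩
      simpa using hv
    · intro hw
      exact ⟨conj w, hw, by simp⟩
  rw [himg]
  have hV : IsOpen ((fun w : ℂ => conj w) ⁻¹' Ω) := hΩ.preimage Complex.continuous_conj
  rintro ⟨a, b⟩ ⟨ha, hb⟩
  refine (hk_main (fun z w => k z (conj w)) Ω _ hΩ hV ?_ ?_ a b ha hb).analyticWithinAt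
  · intro w hw
    exact (hAnalytic _ hw).differentiableOn
  · intro z hz w hw
    have h1 : DifferentiableAt ℂ (fun v => k v z) (conj w) :=
      (hAnalytic z hz).differentiableOn.differentiableAt (hΩ.mem_nhds hw)
    have h2 : DifferentiableAt ℂ (conj ∘ (fun v => k v z) ∘ conj) w := by
      simpa using h1.conj_conj
    refine (h2.congr_of_eventuallyEq ?_).differentiableWithinAt
    filter_upwards [hV.mem_nhds hw] with v hv
    exact hSym z hz _ hv
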